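/- Let G be a graph with n vertices and let κ be an integer with 1 ≤ κ ≤ n. Then there is a decision tree obtainable from T(G) by a (possibly empty) sequence of subtree raising operations that has at most n − κ errors on E₀(G,κ) if and only if G has an independent set of size κ. -/

import Mathlib

/-- The two class labels. -/
inductive Label where
  | blue
  | red
deriving DecidableEq

/-- A decision tree over examples `ι → ℝ` with classes `{blue, red}`:
every inner node carries a feature and a threshold, every leaf a class label.
An example goes to the left child if its value in the node's feature is at most
the threshold, and to the right child otherwise. -/
inductive DTree (ι : Type) where
  | leaf (c : Label)
  | node (feat : ι) (thr : ℝ) (left right : DTree ι)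

namespace DTree

variable {ι : Type}

/-- The class that a decision tree assigns to an example. -/
noncomputable def classify : DTree ι → (ι → ℝ) → Label
  | .leaf c, _ => c
  | .node f t l r, e => if e f ≤ t then l.classify e else r.classify e

/-- The routing path of an example (`false` = left child, `true` = right child);
it is the position of the leaf of the example. -/
noncomputable def route : DTree ι → (ι → ℝ) → List Bool
  | .leaf _, _ => []
  | .node f t l r, e => if e f ≤ t then false :: l.route e else true :: r.route e

/-- The subtree rooted at a position (`none` if the position is not a node). -/
def subtreeAt : DTree ι → List Bool → Option (DTree ι)
  | T, [] => some T
  | .leaf _, _ :: _ => none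
  | .node _ _ l r, b :: p => (if b then r else l).subtreeAt p

/-- Replace the subtree at a given position by another tree. -/
def replaceAt : DTree ι → List Bool → DTree ι → DTree ι
  | _, [], T' => T'
  | .leaf c, _ :: _, _ => .leaf c
  | .node f t l r, b :: p, T' =>
      if b then .node f t l (r.replaceAt p T') else .node f t (l.replaceAt p T') r

/-- The number of inner nodes of a decision tree. -/
def innerCount : DTree ι → ℕ
  | .leaf _ => 0
  | .node _ _ l r => 1 + l.innerCount + r.innerCount

/-- The position `p` is an inner node of `T`. -/
def IsInnerPos (T : DTree ι) (p : List Bool) : Prop :=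
  ∃ f t l r, T.subtreeAt p = some (.node f t l r)

/-- The position `p` is a node of `T`. -/
def IsNodePos (T : DTree ι) (p : List Bool) : Prop :=
  (T.subtreeAt p).isSome

/-- The feature and threshold of the inner node at position `p`. -/
def cutAt (T : DTree ι) (p : List Bool) : Option (ι × ℝ) :=
  match T.subtreeAt p with
  | some (.node f t _ _) => some (f, t)
  | _ => none

/-- The subtree raising operation at position `q` keeping the child in direction `b`:
the subtree rooted at `q` is replaced by the subtree rooted at its `b`-child; it prunes
the node at `q` together with all inner nodes of the subtree rooted at the other child. -/
def raiseAt (T : DTree ι) (q : List Bool) (b : Bool) : DTree ι :=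
  match T.subtreeAt q with
  | some (.node _ _ l r) => T.replaceAt q (if b then r else l)
  | _ => T

end DTree

/-- `E[T,p]`: the examples of `E` whose routing through `T` passes the position `p`. -/
noncomputable def reach {ι : Type} (E : Finset (ι → ℝ)) (T : DTree ι) (p : List Bool) :
    Finset (ι → ℝ) :=
  E.filter fun e => p <+: T.route e

/-- The number of errors of `T` on the training set `(E, lab)`. -/
noncomputable def errCount {ι : Type} (T : DTree ι) (E : Finset (ι → ℝ))
    (lab : (ι → ℝ) → Label) : ℕ :=
  (E.filter fun e => T.classify e ≠ lab e).card

/-- A most frequent label of the labeled set `(E, lab)` (blue in case of a tie). -/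
def majorityLabel {ι : Type} (E : Finset (ι → ℝ)) (lab : (ι → ℝ) → Label) : Label :=
  if (E.filter fun e => lab e = Label.red).card ≤ (E.filter fun e => lab e = Label.blue).card
  then Label.blue else Label.red

/-- One subtree replacement operation: some inner node of `T` is replaced by a leaf
labeled with a most frequent label of the examples reaching it. -/
def ReplStep {ι : Type} (E : Finset (ι → ℝ)) (lab : (ι → ℝ) → Label)
    (T T' : DTree ι) : Prop :=
  ∃ p, T.IsInnerPos p ∧
    T' = T.replaceAt p (.leaf (majorityLabel (reach E T p) lab))

/-- `T` is a reasonable decision tree for `(E, lab)`: every node is reached by some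
example and every leaf carries a most frequent label of the examples reaching it. -/
def Reasonable {ι : Type} (E : Finset (ι → ℝ)) (lab : (ι → ℝ) → Label)
    (T : DTree ι) : Prop :=
  (∀ p, T.IsNodePos p → (reach E T p).Nonempty) ∧
  (∀ p c, T.subtreeAt p = some (.leaf c) → ∀ c' : Label,
    ((reach E T p).filter fun e => lab e = c').card ≤
      ((reach E T p).filter fun e => lab e = c).card)

/-- Apply a sequence of raising operations (given by positions and kept directions). -/
def applySeq {ι : Type} : DTree ι → List (List Bool × Bool) → DTree ι
  | T, [] => T
  | T, (q, b) :: rest => applySeq (T.raiseAt q b) rest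

/-- Each raising operation of the sequence is applied at an inner node. -/
def ValidSeq {ι : Type} : DTree ι → List (List Bool × Bool) → Prop
  | _, [] => True
  | T, (q, b) :: rest => T.IsInnerPos q ∧ ValidSeq (T.raiseAt q b) rest

/-- The total number of inner nodes pruned by a sequence of raising operations. -/
def seqPruned {ι : Type} : DTree ι → List (List Bool × Bool) → ℕ
  | _, [] => 0
  | T, (q, b) :: rest =>
      (match T.subtreeAt q with
        | some (.node _ _ l r) => 1 + DTree.innerCount (if b then l else r)
        | _ => 0) + seqPruned (T.raiseAt q b) rest

/-- `T'` is obtained from `T` by a (possibly empty) sequence of subtree raising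
operations. -/
def RaisedFrom {ι : Type} (T T' : DTree ι) : Prop :=
  ∃ steps, ValidSeq T steps ∧ applySeq T steps = T'

/-- `T'` is obtained from `T` by a sequence of subtree raising operations pruning
exactly `m` inner nodes in total. -/
def RaisedFromPruning {ι : Type} (T : DTree ι) (m : ℕ) (T' : DTree ι) : Prop :=
  ∃ steps, ValidSeq T steps ∧ seqPruned T steps = m ∧ applySeq T steps = T'

/-- Tracking the position of a node through one raising operation: nodes strictly
below the raised node on the discarded side, and the raised node itself, are pruned
(`none`); all other nodes survive at a possibly shifted position. -/
def stepMap (q : List Bool) (b : Bool) (p : List Bool) : Option (List Bool) :=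
  if q <+: p then
    if q ++ [b] <+: p then some (q ++ p.drop (q.length + 1)) else none
  else some p

/-- Tracking the position of a node through a sequence of raising operations. -/
def seqMap : List (List Bool × Bool) → List Bool → Option (List Bool)
  | [], p => some p
  | (q, b) :: rest, p => (stepMap q b p).bind (seqMap rest)

/-- The number of errors of `T` on a multiset of labeled examples. -/
noncomputable def errCountM {ι : Type} (T : DTree ι) (E : Multiset ((ι → ℝ) × Label)) : ℕ :=
  (E.filter fun q => T.classify q.1 ≠ q.2).card

/-- The 0/1 indicator vector of a set of coordinates. -/
def indVec {m : ℕ} (S : Finset (Fin m)) : Fin m → ℝ := fun i => if i ∈ S then 1 else 0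

/-- The blue edge example of an edge `{v, w}`: value `1` exactly in the
coordinates `v` and `w`. -/
def edgeEx (n : ℕ) : Sym2 (Fin n) → (Fin (n + 1) → ℝ) :=
  Sym2.lift ⟨fun v w => indVec {v.castSucc, w.castSucc},
    fun v w => by simp only []; rw [Finset.pair_comm]⟩

/-- The blue vertex example of a vertex `v`: value `1` exactly in the coordinates
`v` and `d*` (the last coordinate). -/
def vertEx (n : ℕ) (v : Fin n) : Fin (n + 1) → ℝ := indVec {v.castSucc, Fin.last n}

/-- The blue example with value `1` only in the coordinate `d*`. -/
def starEx (n : ℕ) : Fin (n + 1) → ℝ := indVec {Fin.last n}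

/-- The labeling: the all-zero example is red, all other examples are blue. -/
noncomputable def labG (n : ℕ) : (Fin (n + 1) → ℝ) → Label :=
  fun e => if e = (fun _ => 0) then Label.red else Label.blue

/-- The training set `E(G)` of the independent-set construction. -/
noncomputable def EG {n : ℕ} (G : SimpleGraph (Fin n)) [DecidableRel G.Adj] :
    Finset (Fin (n + 1) → ℝ) :=
  (G.edgeFinset.image (edgeEx n)) ∪ (Finset.univ.image (vertEx n)) ∪
    {starEx n, fun _ => 0}

/-- A descending path of cuts `f ≤ 0` (for `f` in the given list) whose right
children are blue leaves and whose left children continue the path, ending in the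
given tree. -/
def chainB {m : ℕ} (fs : List (Fin m)) (tail : DTree (Fin m)) : DTree (Fin m) :=
  fs.foldr (fun f acc => DTree.node f 0 acc (.leaf .blue)) tail

/-- The decision tree `T(G)`: the path of cuts `v₁ ≤ 0, …, vₙ ≤ 0, d* ≤ 0`; at each
vertex cut the right child is a blue leaf; the final cut has a red left child and a
blue right child. -/
def TG (n : ℕ) : DTree (Fin (n + 1)) :=
  chainB (List.ofFn fun i : Fin n => i.castSucc)
    (DTree.node (Fin.last n) 0 (.leaf .red) (.leaf .blue))

/-- The tree obtained from `T(G)` by applying, at each cut `v ≤ 0` with `v ∈ R`,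
the raising operation keeping the child that continues the path: the path of the
cuts `v ≤ 0` for `v ∉ R` followed by the cut `d* ≤ 0`. -/
def TGkeep (n : ℕ) (R : Finset (Fin n)) : DTree (Fin (n + 1)) :=
  chainB (((List.ofFn fun i : Fin n => i).filter fun v => decide (v ∉ R)).map Fin.castSucc)
    (DTree.node (Fin.last n) 0 (.leaf .red) (.leaf .blue))

/-- The training set `E₀(G,κ)` of the independent-set construction with duplicated
examples, where `t = n - κ`: for each edge, `n` identical blue edge examples; for
each vertex `v`, one blue example (value `1` at `v` and `d*`) and one red example
(value `1` only at `v`); `n²` identical all-zero red examples; and `t + 1`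
identical blue examples with value `1` only at `d*`. -/
noncomputable def E0 {n : ℕ} (G : SimpleGraph (Fin n)) [DecidableRel G.Adj]
    (κ : ℕ) : Multiset ((Fin (n + 1) → ℝ) × Label) :=
  (G.edgeFinset.val.bind fun s => Multiset.replicate n (edgeEx n s, Label.blue))
  + (Finset.univ.val.bind fun v : Fin n =>
      {(vertEx n v, Label.blue), (indVec {v.castSucc}, Label.red)})
  + Multiset.replicate (n ^ 2) ((fun _ => 0), Label.red)
  + Multiset.replicate (n - κ + 1) (starEx n, Label.blue)

section Raising

variable {ι : Type}

@[simp]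
theorem DTree.raiseAt_leaf (c : Label) (q : List Bool) (b : Bool) :
    (DTree.leaf c : DTree ι).raiseAt q b = .leaf c := by
  cases q <;> simp [DTree.raiseAt, DTree.subtreeAt]

@[simp]
theorem DTree.raiseAt_node_nil (f : ι) (t : ℝ) (l r : DTree ι) (b : Bool) :
    (DTree.node f t l r).raiseAt [] b = if b then r else l := by
  simp [DTree.raiseAt, DTree.subtreeAt, DTree.replaceAt]

@[simp]
theorem DTree.raiseAt_node_false (f : ι) (t : ℝ) (l r : DTree ι) (q : List Bool) (b : Bool) :
    (DTree.node f t l r).raiseAt (false :: q) b = .node f t (l.raiseAt q b) r := by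
  simp only [DTree.raiseAt, DTree.subtreeAt, Bool.false_eq_true, if_false]
  split <;> simp [DTree.replaceAt]

@[simp]
theorem DTree.raiseAt_node_true (f : ι) (t : ℝ) (l r : DTree ι) (q : List Bool) (b : Bool) :
    (DTree.node f t l r).raiseAt (true :: q) b = .node f t l (r.raiseAt q b) := by
  simp only [DTree.raiseAt, DTree.subtreeAt, if_true]
  split <;> simp [DTree.replaceAt]

theorem RaisedFrom.refl (T : DTree ι) : RaisedFrom T T := ⟨[], trivial, rfl⟩

/-- Raising the left child of the root, then continuing inside it. -/
theorem RaisedFrom.node_of_left {f : ι} {t : ℝ} {l r T' : DTree ι} (h : RaisedFrom l T') :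
    RaisedFrom (.node f t l r) T' := by
  obtain ⟨steps, hv, rfl⟩ := h
  exact ⟨([], false) :: steps, ⟨⟨f, t, l, r, rfl⟩, by simpa using hv⟩, by simp [applySeq]⟩

theorem RaisedFrom.congr_left {f : ι} {t : ℝ} {l l' r : DTree ι} (h : RaisedFrom l l') :
    RaisedFrom (.node f t l r) (.node f t l' r) := by
  obtain ⟨steps, hv, rfl⟩ := h
  refine ⟨steps.map fun s => (false :: s.1, s.2), ?_, ?_⟩
  · induction steps generalizing l with
    | nil => trivial
    | cons s steps ih =>
      obtain ⟨q, b⟩ := s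
      refine ⟨by simpa [DTree.IsInnerPos, DTree.subtreeAt] using hv.1, ?_⟩
      simpa using ih hv.2
  · clear hv
    induction steps generalizing l with
    | nil => rfl
    | cons s steps ih =>
      obtain ⟨q, b⟩ := s
      simpa [applySeq] using ih

/-- A property preserved by single raising operations is preserved by `RaisedFrom`. -/
theorem RaisedFrom.preserves {P : DTree ι → Prop}
    (hP : ∀ T q b, P T → P (T.raiseAt q b)) {T T' : DTree ι} (h : RaisedFrom T T') (hT : P T) :
    P T' := by
  obtain ⟨steps, -, rfl⟩ := h
  induction steps generalizing T with
  | nil => exact hT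
  | cons s steps ih => exact ih (hP T s.1 s.2 hT)

end Raising

section Chain

variable {m : ℕ}

/-- The last cut of `TG`, with a red left and a blue right leaf. -/
def redBlueCut (d : Fin m) : DTree (Fin m) := .node d 0 (.leaf .red) (.leaf .blue)

theorem raisedFrom_chainB_of_sublist {fs fs' : List (Fin m)} (h : fs'.Sublist fs)
    (tail : DTree (Fin m)) : RaisedFrom (chainB fs tail) (chainB fs' tail) := by
  induction h with
  | slnil => exact .refl _
  | cons _ _ ih => exact ih.node_of_left
  | cons_cons _ _ ih => exact ih.congr_left

/-- Raising within a chain ending in `redBlueCut d` or a leaf gives a shorter such chain. -/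
theorem exists_raiseAt_chainB_eq (d : Fin m) (fs : List (Fin m)) (tail : DTree (Fin m))
    (ht : tail = redBlueCut d ∨ ∃ c, tail = .leaf c) (q : List Bool) (b : Bool) :
    ∃ fs' tail', fs' ⊆ fs ∧ (tail' = redBlueCut d ∨ ∃ c, tail' = .leaf c) ∧
      (chainB fs tail).raiseAt q b = chainB fs' tail' := by
  induction fs generalizing q with
  | nil =>
    refine ⟨[], tail.raiseAt q b, List.Subset.refl _, ?_, rfl⟩
    rcases ht with rfl | ⟨c, rfl⟩
    · rcases q with _ | ⟨_ | _, q⟩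
      · cases b <;> simp [redBlueCut]
      · simp [redBlueCut]
      · simp [redBlueCut]
    · simp
  | cons f fs ih =>
    have hcons : ∀ (gs : List (Fin m)) (T : DTree (Fin m)),
        chainB (f :: gs) T = .node f 0 (chainB gs T) (.leaf .blue) := fun _ _ => rfl
    rcases q with _ | ⟨_ | _, q⟩
    · cases b
      · exact ⟨fs, tail, by simp, ht, by simp [hcons]⟩
      · exact ⟨[], .leaf .blue, by simp, by simp, by rw [hcons]; simp [chainB]⟩
    · obtain ⟨fs', tail', hs, ht', he⟩ := ih q
      exact ⟨f :: fs', tail', List.cons_subset_cons f hs, ht', by simp [hcons, he]⟩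
    · exact ⟨f :: fs, tail, List.Subset.refl _, ht, by simp [hcons]⟩

theorem classify_chainB (fs : List (Fin m)) (tail : DTree (Fin m)) (e : Fin m → ℝ) :
    (chainB fs tail).classify e = if ∃ f ∈ fs, 0 < e f then .blue else tail.classify e := by
  induction fs with
  | nil => simp [chainB]
  | cons f fs ih =>
    change (DTree.node f 0 (chainB fs tail) (.leaf .blue)).classify e = _
    by_cases hf : 0 < e f
    · simp [DTree.classify, hf]
    · simp [DTree.classify, hf, ih, not_lt.mp hf]

theorem indVec_pos {S : Finset (Fin m)} {i : Fin m} : 0 < indVec S i ↔ i ∈ S := by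
  unfold indVec; split <;> simp [*]

theorem classify_chainB_redBlueCut (fs : List (Fin m)) (d : Fin m) (S : Finset (Fin m)) :
    (chainB fs (redBlueCut d)).classify (indVec S) =
      if (∃ f ∈ fs, f ∈ S) ∨ d ∈ S then .blue else .red := by
  simp only [classify_chainB, indVec_pos, redBlueCut, DTree.classify, ← not_lt]
  by_cases h : ∃ f ∈ fs, f ∈ S <;> by_cases hd : d ∈ S <;> simp [h, hd]

end Chain

section Errors

variable {ι : Type}

theorem errCountM_add (T : DTree ι) (A B : Multiset ((ι → ℝ) × Label)) :
    errCountM T (A + B) = errCountM T A + errCountM T B := by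
  simp [errCountM]

theorem errCountM_replicate (T : DTree ι) (k : ℕ) (e : ι → ℝ) (c : Label) :
    errCountM T (Multiset.replicate k (e, c)) = if T.classify e ≠ c then k else 0 := by
  unfold errCountM
  split
  · rw [Multiset.filter_eq_self.2] <;> simp_all [Multiset.mem_replicate]
  · rw [Multiset.filter_eq_nil.2] <;> simp_all [Multiset.mem_replicate]

theorem errCountM_sum_bind {α : Type*} (T : DTree ι) (s : Finset α)
    (g : α → Multiset ((ι → ℝ) × Label)) :
    errCountM T (s.val.bind g) = ∑ a ∈ s, errCountM T (g a) := by
  simp only [errCountM, Multiset.filter_bind, Multiset.card_bind]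
  rfl

theorem errCountM_pair (T : DTree ι) (e e' : ι → ℝ) (c c' : Label) :
    errCountM T {(e, c), (e', c')} =
      (if T.classify e ≠ c then 1 else 0) + (if T.classify e' ≠ c' then 1 else 0) := by
  have : ({(e, c), (e', c')} : Multiset ((ι → ℝ) × Label)) =
      Multiset.replicate 1 (e, c) + Multiset.replicate 1 (e', c') := rfl
  rw [this, errCountM_add, errCountM_replicate, errCountM_replicate]

theorem errCountM_E0 {n : ℕ} (G : SimpleGraph (Fin n)) [DecidableRel G.Adj] (κ : ℕ)
    (T : DTree (Fin (n + 1))) :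
    errCountM T (E0 G κ) =
      (∑ s ∈ G.edgeFinset, if T.classify (edgeEx n s) ≠ .blue then n else 0)
      + (∑ v : Fin n, ((if T.classify (vertEx n v) ≠ .blue then 1 else 0)
          + (if T.classify (indVec {v.castSucc}) ≠ .red then 1 else 0)))
      + (if T.classify (fun _ => 0) ≠ .red then n ^ 2 else 0)
      + (if T.classify (starEx n) ≠ .blue then n - κ + 1 else 0) := by
  simp only [E0, errCountM_add, errCountM_sum_bind, errCountM_replicate, errCountM_pair]

/-- The errors of a chain of vertex cuts ending in the cut `d* ≤ 0`: `n` for every edge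
missed by the chain, and one for every vertex on it. -/
theorem errCountM_chainB_redBlueCut {n : ℕ} (G : SimpleGraph (Fin n)) [DecidableRel G.Adj]
    (κ : ℕ) (fs : List (Fin (n + 1))) :
    errCountM (chainB fs (redBlueCut (Fin.last n))) (E0 G κ) =
      (∑ s ∈ G.edgeFinset, if ∃ v ∈ s, v.castSucc ∈ fs then 0 else n)
      + (Finset.univ.filter fun v : Fin n => v.castSucc ∈ fs).card := by
  have hlast : ∀ v : Fin n, Fin.last n ≠ v.castSucc := fun v => v.castSucc_ne_last.symm
  have hzero : (fun _ => 0 : Fin (n + 1) → ℝ) = indVec ∅ := by ext; simp [indVec]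
  rw [errCountM_E0, hzero]
  simp only [vertEx, starEx, classify_chainB_redBlueCut, Finset.card_filter]
  simp only [Finset.mem_insert, Finset.mem_singleton, or_true, ne_eq, not_true_eq_false,
    if_true, if_false, Finset.notMem_empty, and_false, exists_false, or_self, add_zero, zero_add,
    exists_eq_right, hlast, or_false]
  congr 1
  · refine Finset.sum_congr rfl fun s _ => ?_
    induction s with | _ v w
    simp only [edgeEx, Sym2.lift_mk, classify_chainB_redBlueCut, Finset.mem_insert,
      Finset.mem_singleton, hlast, or_false, Sym2.mem_iff, and_or_left, exists_or,
      exists_eq_right, or_and_right, exists_eq_left]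
    split <;> simp
  · refine Finset.sum_congr rfl fun v _ => ?_
    split <;> simp

end Errors

/-- For a graph `G` on `n` vertices and `1 ≤ κ ≤ n`: a decision
tree with at most `n − κ` errors on `E₀(G,κ)` is obtainable from `T(G)` by a
(possibly empty) sequence of subtree raising operations iff `G` has an independent
set of size `κ`. -/
theorem stmt12 {n : ℕ} (G : SimpleGraph (Fin n)) [DecidableRel G.Adj]
    (κ : ℕ) (h1 : 1 ≤ κ) (h2 : κ ≤ n) :
    (∃ T', RaisedFrom (TG n) T' ∧ errCountM T' (E0 G κ) ≤ n - κ)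
    ↔ ∃ S : Finset (Fin n), S.card = κ ∧ ∀ v ∈ S, ∀ w ∈ S, ¬ G.Adj v w := by
  have hTG : TG n = chainB (List.ofFn fun i : Fin n => i.castSucc) (redBlueCut (Fin.last n)) :=
    rfl
  have hlast : Fin.last n ∉ List.ofFn fun i : Fin n => i.castSucc := by
    simp [List.mem_ofFn, Fin.castSucc_ne_last]
  constructor
  · rintro ⟨T', hT', herr⟩
    obtain ⟨fs, tail, hfs, ht, rfl⟩ : ∃ fs tail, Fin.last n ∉ fs ∧
        (tail = redBlueCut (Fin.last n) ∨ ∃ c, tail = .leaf c) ∧ T' = chainB fs tail := by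
      refine hT'.preserves (P := fun T => ∃ fs tail, Fin.last n ∉ fs ∧
        (tail = redBlueCut (Fin.last n) ∨ ∃ c, tail = .leaf c) ∧ T = chainB fs tail) ?_
        ⟨_, _, hlast, .inl rfl, hTG⟩
      rintro _ q b ⟨fs, tail, hfs, ht, rfl⟩
      obtain ⟨fs', tail', hs, ht', he⟩ := exists_raiseAt_chainB_eq _ fs tail ht q b
      exact ⟨fs', tail', fun h => hfs (hs h), ht', he⟩
    rcases ht with rfl | ⟨_ | _, rfl⟩
    · rw [errCountM_chainB_redBlueCut] at herr
      set K := Finset.univ.filter fun v : Fin n => v.castSucc ∈ fs with hK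
      have hcard : κ ≤ Kᶜ.card := by
        rw [Finset.card_compl, Fintype.card_fin]
        omega
      obtain ⟨S, hSK, hS⟩ := Finset.exists_subset_card_eq hcard
      refine ⟨S, hS, fun v hv w hw hvw => ?_⟩
      have hv' : v.castSucc ∉ fs := by simpa [hK] using hSK hv
      have hw' : w.castSucc ∉ fs := by simpa [hK] using hSK hw
      have hle := Finset.single_le_sum
        (f := fun s : Sym2 (Fin n) => if ∃ v ∈ s, v.castSucc ∈ fs then 0 else n)
        (fun _ _ => Nat.zero_le _) (SimpleGraph.mem_edgeFinset.2 (G.mem_edgeSet.2 hvw))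
      have hedge : ¬ ∃ u ∈ s(v, w), u.castSucc ∈ fs := by
        simp [hv', hw']
      simp only [if_neg hedge] at hle
      omega
    · rw [errCountM_E0] at herr
      have hsq : n ≤ n ^ 2 := Nat.le_self_pow two_ne_zero n
      simp only [classify_chainB _ _ (fun _ => 0)] at herr
      simp [DTree.classify] at herr
      omega
    · rw [errCountM_E0] at herr
      have hstar : ¬ ∃ f ∈ fs, 0 < starEx n f := by simpa [starEx, indVec_pos] using hfs
      simp only [classify_chainB _ _ (starEx n), if_neg hstar] at herr
      simp [DTree.classify] at herr
      omega
  · rintro ⟨S, hS, hind⟩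
    set fs := (List.ofFn fun i : Fin n => i.castSucc).filter
      fun f => decide (f ∉ S.map Fin.castSuccEmb) with hfs
    have hmem : ∀ v : Fin n, v.castSucc ∈ fs ↔ v ∉ S := by
      simp [hfs, List.mem_filter, List.mem_ofFn]
    refine ⟨chainB fs (redBlueCut (Fin.last n)),
      hTG ▸ raisedFrom_chainB_of_sublist List.filter_sublist _, ?_⟩
    simp only [errCountM_chainB_redBlueCut, hmem]
    have hzero : (∑ s ∈ G.edgeFinset, if ∃ v ∈ s, v ∉ S then 0 else n) = 0 := by
      refine Finset.sum_eq_zero fun s hs => if_pos ?_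
      induction s with | _ v w
      by_contra! h
      exact hind v (h v (by simp)) w (h w (by simp)) (by simpa using hs)
    rw [hzero, Finset.filter_not, Finset.filter_mem_eq_inter, Finset.univ_inter,
      ← Finset.compl_eq_univ_sdiff, Finset.card_compl, Fintype.card_fin, hS, zero_add]
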